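/- Poincaré-type inequality in the mixture space: if f ∈ C¹ with polynomial growth on ℝⁿ and λ > 0 satisfies C(λπ/2)·∫ C(|y|) M(y)dy = 1 with C(a) = max(|a|, a²), then ∫(cosh−1)_*(λ(f(x) − ∫f M)) M(x)dx ≤ ∫(cosh−1)_*(|∇f(x)|) M(x)dx; equivalently ‖f − ∫ f M‖_{(cosh−1)_*,M} ≤ λ^{−1} ‖|∇f|‖_{(cosh−1)_*,M}. -/

import Mathlib

open Real MeasureTheory
open scoped ENNReal

noncomputable section

/-- The standard `n`-dimensional Gaussian density. -/
def gaussM (n : ℕ) (x : EuclideanSpace ℝ (Fin n)) : ℝ :=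
  (2 * π) ^ (-(n : ℝ) / 2) * exp (-‖x‖ ^ 2 / 2)

/-- The standard Gaussian measure `M(x)dx` on `ℝⁿ`. -/
def gaussMeasure (n : ℕ) : Measure (EuclideanSpace ℝ (Fin n)) :=
  volume.withDensity fun x => ENNReal.ofReal (gaussM n x)

/-- The conjugate Young function `(cosh−1)_*`. -/
def conjY (y : ℝ) : ℝ := ∫ t in (0:ℝ)..y, arsinh t

/-- Luxemburg norm for the Young function `Φ` with respect to a measure `μ`. -/
def luxNorm {E : Type*} [MeasurableSpace E] (Φ : ℝ → ℝ) (μ : Measure E)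
    (g : E → ℝ) : ℝ :=
  sInf {ρ : ℝ | 0 < ρ ∧ ∫ x, Φ (g x / ρ) ∂μ ≤ 1 ∧
    Integrable (fun x => Φ (g x / ρ)) μ}


lemma conjY_hasDerivAt (y : ℝ) : HasDerivAt conjY (arsinh y) y :=
  intervalIntegral.integral_hasDerivAt_right
    (continuous_arsinh.intervalIntegrable _ _)
    (continuous_arsinh.stronglyMeasurableAtFilter _ _) continuous_arsinh.continuousAt

lemma conjY_continuous : Continuous conjY :=
  continuous_iff_continuousAt.2 fun y => (conjY_hasDerivAt y).continuousAt

lemma conjY_zero : conjY 0 = 0 := by simp [conjY]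

lemma conjY_deriv : deriv conjY = arsinh := funext fun y => (conjY_hasDerivAt y).deriv

lemma conjY_convex : ConvexOn ℝ Set.univ conjY := by
  apply Monotone.convexOn_univ_of_deriv
  · exact fun y => (conjY_hasDerivAt y).differentiableAt
  · rw [conjY_deriv]; exact arsinh_strictMono.monotone

lemma conjY_neg (y : ℝ) : conjY (-y) = conjY y := by
  have := intervalIntegral.integral_comp_neg (a := 0) (b := y) (f := arsinh)
  simp only [arsinh_neg, neg_zero, intervalIntegral.integral_neg] at this
  unfold conjY
  rw [intervalIntegral.integral_symm, ← this, neg_neg]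

lemma conjY_abs (y : ℝ) : conjY |y| = conjY y := by
  rcases abs_choice y with h | h <;> rw [h]
  exact conjY_neg y

lemma conjY_mono {s t : ℝ} (hs : 0 ≤ s) (hst : s ≤ t) : conjY s ≤ conjY t := by
  have : MonotoneOn conjY (Set.Ici 0) := by
    apply monotoneOn_of_deriv_nonneg (convex_Ici 0) conjY_continuous.continuousOn
    · exact fun y _ => (conjY_hasDerivAt y).differentiableAt.differentiableWithinAt
    · intro x hx
      rw [interior_Ici] at hx
      rw [conjY_deriv]
      exact arsinh_nonneg_iff.2 (le_of_lt hx)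
  exact this hs (hs.trans hst) hst

lemma conjY_nonneg (y : ℝ) : 0 ≤ conjY y := by
  rw [← conjY_abs, ← conjY_zero]
  exact conjY_mono le_rfl (abs_nonneg _)

lemma arsinh_mul_le {a t : ℝ} (ha : 1 ≤ a) (ht : 0 ≤ t) : arsinh (a * t) ≤ a * arsinh t := by
  have hd : ∀ x, HasDerivAt (fun t => a * arsinh t - arsinh (a * t))
      (a * (√(1 + x ^ 2))⁻¹ - (√(1 + (a * x) ^ 2))⁻¹ * (a * 1)) x := fun x =>
    ((hasDerivAt_arsinh x).const_mul a).sub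
      ((hasDerivAt_arsinh (a * x)).comp x ((hasDerivAt_id x).const_mul a))
  have : MonotoneOn (fun t => a * arsinh t - arsinh (a * t)) (Set.Ici 0) := by
    apply monotoneOn_of_deriv_nonneg (convex_Ici 0)
    · exact fun x _ => (hd x).continuousAt.continuousWithinAt
    · exact fun x _ => (hd x).differentiableAt.differentiableWithinAt
    · intro x hx
      rw [(hd x).deriv]
      have h1 : √(1 + x ^ 2) ≤ √(1 + (a * x) ^ 2) := by
        apply Real.sqrt_le_sqrt
        nlinarith [sq_nonneg x, mul_nonneg (sq_nonneg x) (by nlinarith : 0 ≤ a ^ 2 - 1)]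
      have h2 : 0 < √(1 + x ^ 2) := Real.sqrt_pos.2 (by positivity)
      have h3 := inv_anti₀ h2 h1
      nlinarith
  have := this (Set.mem_Ici.2 le_rfl) ht ht
  simp at this
  linarith

lemma conjY_le_sq (y : ℝ) : conjY y ≤ y ^ 2 := by
  have key : ∀ y : ℝ, 0 ≤ y → conjY y ≤ y ^ 2 := by
    intro y hy
    have hd : ∀ x, HasDerivAt (fun t => t ^ 2 - conjY t) (2 * x - arsinh x) x := fun x => by
      have := (hasDerivAt_pow 2 x).sub (conjY_hasDerivAt x)
      convert! this using 1
      simp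
    have hd2 : ∀ x, HasDerivAt (fun t => t - arsinh t) (1 - (√(1 + x ^ 2))⁻¹) x := fun x =>
      (hasDerivAt_id x).sub (hasDerivAt_arsinh x)
    have m2 : MonotoneOn (fun t => t - arsinh t) (Set.Ici 0) := by
      apply monotoneOn_of_deriv_nonneg (convex_Ici 0)
      · exact fun x _ => (hd2 x).continuousAt.continuousWithinAt
      · exact fun x _ => (hd2 x).differentiableAt.differentiableWithinAt
      · intro x hx
        rw [(hd2 x).deriv]
        have : 1 ≤ √(1 + x ^ 2) := Real.one_le_sqrt.2 (by nlinarith [sq_nonneg x])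
        linarith [inv_le_one_of_one_le₀ this]
    have m1 : MonotoneOn (fun t => t ^ 2 - conjY t) (Set.Ici 0) := by
      apply monotoneOn_of_deriv_nonneg (convex_Ici 0)
      · exact fun x _ => (hd x).continuousAt.continuousWithinAt
      · exact fun x _ => (hd x).differentiableAt.differentiableWithinAt
      · intro x hx
        rw [interior_Ici] at hx
        have hx' : (0:ℝ) ≤ x := le_of_lt hx
        rw [(hd x).deriv]
        have := m2 (Set.mem_Ici.2 le_rfl) hx' hx'
        simp at this
        linarith
    have := m1 (Set.mem_Ici.2 le_rfl) hy hy
    simp [conjY_zero] at this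
    linarith
  rw [← conjY_abs, ← sq_abs]
  exact key _ (abs_nonneg y)

lemma conjY_mul_le {a b : ℝ} (ha : 0 ≤ a) (hb : 0 ≤ b) :
    conjY (a * b) ≤ max a (a ^ 2) * conjY b := by
  rcases le_total a 1 with h | h
  · have := conjY_convex.2 (Set.mem_univ b) (Set.mem_univ 0) ha (sub_nonneg.2 h) (by ring)
    simp [conjY_zero] at this
    exact this.trans (mul_le_mul_of_nonneg_right (le_max_left _ _) (conjY_nonneg b))
  · have h1 : conjY (a * b) ≤ a ^ 2 * conjY b := by
      have e : conjY (a * b) = a * ∫ t in (0:ℝ)..b, arsinh (a * t) := by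
        rw [intervalIntegral.mul_integral_comp_mul_left]; simp [conjY]
      have e2 : a ^ 2 * conjY b = a * ∫ t in (0:ℝ)..b, a * arsinh t := by
        rw [intervalIntegral.integral_const_mul, conjY]; ring
      rw [e, e2]
      apply mul_le_mul_of_nonneg_left _ ha
      apply intervalIntegral.integral_mono_on hb
      · exact (continuous_arsinh.comp (continuous_const.mul continuous_id)).intervalIntegrable _ _
      · exact (continuous_const.mul continuous_arsinh).intervalIntegrable _ _
      · exact fun x hx => arsinh_mul_le h hx.1
    exact h1.trans (mul_le_mul_of_nonneg_right (le_max_right _ _) (conjY_nonneg b))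

lemma gaussMeasure_eq (n : ℕ) :
    gaussMeasure n = ProbabilityTheory.stdGaussian (EuclideanSpace ℝ (Fin n)) := by
  have hc : Continuous (gaussM n) := by unfold gaussM; fun_prop
  have hm : Measurable fun x => ENNReal.ofReal (gaussM n x) :=
    ENNReal.measurable_ofReal.comp hc.measurable
  have hpos : ∀ x, 0 ≤ gaussM n x := fun x => by unfold gaussM; positivity
  have hint1 : ∫ x, gaussM n x = 1 := by
    unfold gaussM
    rw [integral_const_mul]
    have := GaussianFourier.integral_rexp_neg_mul_sq_norm
      (V := EuclideanSpace ℝ (Fin n)) (b := 1/2) (by norm_num)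
    have e : ∀ x : EuclideanSpace ℝ (Fin n), -‖x‖^2/2 = -(1/2) * ‖x‖^2 := fun x => by ring
    simp_rw [e]
    rw [this, finrank_euclideanSpace_fin, show π / (1/2) = 2 * π by ring,
      ← Real.rpow_add (by positivity)]
    rw [show -(n:ℝ)/2 + n/2 = 0 by ring, Real.rpow_zero]
  have hI : Integrable (gaussM n) := by
    by_contra h
    rw [integral_undef h] at hint1
    norm_num at hint1
  have : IsFiniteMeasure (gaussMeasure n) :=
    isFiniteMeasure_withDensity_ofReal hI.2
  apply Measure.ext_of_charFun
  ext t
  rw [ProbabilityTheory.charFun_stdGaussian, charFun_apply, gaussMeasure,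
    integral_withDensity_eq_integral_toReal_smul hm (by simp)]
  have := GaussianFourier.integral_cexp_neg_mul_sq_norm_add
      (V := EuclideanSpace ℝ (Fin n)) (b := 1/2) (by norm_num) Complex.I t
  have e : ∀ x : EuclideanSpace ℝ (Fin n),
      (ENNReal.ofReal (gaussM n x)).toReal • Complex.exp (inner ℝ x t * Complex.I) =
      ((2 * π : ℝ) ^ (-(n : ℝ) / 2) : ℝ) *
        Complex.exp (-(1/2) * ‖x‖ ^ 2 + Complex.I * inner ℝ t x) := by
    intro x
    rw [ENNReal.toReal_ofReal (hpos x), gaussM, Complex.real_smul, Complex.ofReal_mul, mul_assoc,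
      Complex.ofReal_exp, ← Complex.exp_add, real_inner_comm]
    push_cast
    congr 2
    ring
  simp_rw [e]
  rw [integral_const_mul, this, finrank_euclideanSpace_fin, ← mul_assoc]
  have e3 : (((2 * π : ℝ) ^ (-(n : ℝ) / 2) : ℝ) : ℂ) * ((π:ℂ) / (1/2)) ^ ((n:ℂ)/2) = 1 := by
    rw [show (π:ℂ) / (1/2) = ((2 * π : ℝ) : ℂ) by push_cast; ring,
      show ((n:ℂ)/2) = (((n:ℝ)/2 : ℝ) : ℂ) by push_cast; ring,
      ← Complex.ofReal_cpow (by positivity), ← Complex.ofReal_mul, ← Real.rpow_add (by positivity),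
      show -(n:ℝ)/2 + n/2 = 0 by ring, Real.rpow_zero, Complex.ofReal_one]
  rw [e3, one_mul, Complex.I_sq]
  congr 1
  ring

lemma integrable_of_growth {E : Type*} [NormedAddCommGroup E] [NormedSpace ℝ E]
    [CompleteSpace E] [SecondCountableTopology E] [MeasurableSpace E] [BorelSpace E]
    (μ : Measure E) [ProbabilityTheory.IsGaussian μ] {g : E → ℝ} (hg : Continuous g)
    (C : ℝ) (k : ℕ) (h : ∀ x, |g x| ≤ C * (1 + ‖x‖) ^ k) : Integrable g μ := by
  have h1 : Integrable (fun x : E => (1 + ‖x‖) ^ k) μ := by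
    have h0 : MemLp (fun x : E => 1 + ‖x‖) k μ :=
      (memLp_const (1:ℝ)).add
        (ProbabilityTheory.IsGaussian.memLp_id μ (k : ℝ≥0∞) (ENNReal.natCast_ne_top k)).norm
    have := h0.integrable_norm_pow'
    refine this.congr (Filter.Eventually.of_forall fun x => ?_)
    simp only [Real.norm_eq_abs]
    rw [abs_of_nonneg (by positivity)]
  refine (h1.const_mul C).mono' hg.aestronglyMeasurable (Filter.Eventually.of_forall fun x => ?_)
  exact h x

section core
variable {E : Type*} [NormedAddCommGroup E] [NormedSpace ℝ E]
    [CompleteSpace E] [SecondCountableTopology E] [MeasurableSpace E] [BorelSpace E]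

set_option maxHeartbeats 2000000 in
lemma prod_part (μ : Measure E) [ProbabilityTheory.IsGaussian μ] (hμ : ∫ x, id x ∂μ = 0)
    (f : E → ℝ) (hf : ContDiff ℝ 1 f) (C : ℝ) (k : ℕ)
    (hC : ∀ x, |f x| + ‖fderiv ℝ f x‖ ≤ C * (1 + ‖x‖) ^ k) (lam : ℝ) (hlam : 0 < lam) :
    ∫ p : E × E, conjY (lam * (f p.2 - f p.1)) ∂(μ.prod μ) ≤
      max |lam * π / 2| ((lam * π / 2) ^ 2) * (∫ y, max ‖y‖ (‖y‖ ^ 2) ∂μ) *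
        ∫ x, conjY ‖fderiv ℝ f x‖ ∂μ := by
  have hC0 : 0 ≤ C := by
    have := hC 0
    simp at this
    exact le_trans (by positivity) this
  have hf' : Continuous (fderiv ℝ f) := hf.continuous_fderiv one_ne_zero
  set a : ℝ := lam * π / 2 with ha
  have hapos : 0 < a := by positivity
  set R : ℝ → E × E → E × E := fun θ p => ContinuousLinearMap.rotation θ p with hR
  have hRc : Continuous (fun q : ℝ × (E × E) => R q.1 q.2) := by
    simp only [hR, ContinuousLinearMap.rotation_apply]
    fun_prop
  -- the function on the product
  set K : E × E → ℝ := fun q => conjY (a * fderiv ℝ f q.1 q.2) with hK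
  have hKc : Continuous K := by
    apply conjY_continuous.comp
    apply continuous_const.mul
    exact (hf'.comp continuous_fst).clm_apply continuous_snd
  have hKb : ∀ q, |K q| ≤ (a ^ 2 * C ^ 2) * (1 + ‖q‖) ^ (2 * k + 2) := by
    intro q
    rw [abs_of_nonneg (conjY_nonneg _)]
    refine (conjY_le_sq _).trans ?_
    have h1 : |fderiv ℝ f q.1 q.2| ≤ C * (1 + ‖q‖) ^ (k + 1) := by
      have e1 : ‖fderiv ℝ f q.1‖ ≤ C * (1 + ‖q‖) ^ k := by
        have := hC q.1
        have h3 : ‖q.1‖ ≤ ‖q‖ := norm_fst_le q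
        have : C * (1 + ‖q.1‖) ^ k ≤ C * (1 + ‖q‖) ^ k := by gcongr
        linarith [hC q.1, abs_nonneg (f q.1)]
      have e2 : ‖q.2‖ ≤ 1 + ‖q‖ := by linarith [norm_snd_le q]
      calc |fderiv ℝ f q.1 q.2| ≤ ‖fderiv ℝ f q.1‖ * ‖q.2‖ := (fderiv ℝ f q.1).le_opNorm _
        _ ≤ (C * (1 + ‖q‖) ^ k) * (1 + ‖q‖) := by gcongr
        _ = _ := by ring
    calc (a * fderiv ℝ f q.1 q.2) ^ 2 = a ^ 2 * |fderiv ℝ f q.1 q.2| ^ 2 := by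
          rw [sq_abs]; ring
      _ ≤ a ^ 2 * (C * (1 + ‖q‖) ^ (k + 1)) ^ 2 := by gcongr
      _ = _ := by ring
  have hKint : Integrable K (μ.prod μ) := integrable_of_growth _ hKc _ _ hKb
  have hRb : ∀ θ p, ‖R θ p‖ ≤ 2 * ‖p‖ := by
    intro θ p
    simp only [hR, ContinuousLinearMap.rotation_apply]
    have h1 : ‖p.1‖ ≤ ‖p‖ := norm_fst_le p
    have h2 : ‖p.2‖ ≤ ‖p‖ := norm_snd_le p
    have hs := abs_sin_le_one θ
    have hc := abs_cos_le_one θ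
    have key : ∀ (s t : ℝ), |s| ≤ 1 → |t| ≤ 1 → ‖s • p.1 + t • p.2‖ ≤ 2 * ‖p‖ := by
      intro s t hs ht
      refine (norm_add_le _ _).trans ?_
      rw [norm_smul, norm_smul, Real.norm_eq_abs, Real.norm_eq_abs]
      nlinarith [norm_nonneg p.1, norm_nonneg p.2]
    exact max_le (key _ _ hc hs) (key _ _ (by rwa [abs_neg]) hc)
  -- rotation invariance
  have hrot : ∀ θ, ∫ p, K (R θ p) ∂(μ.prod μ) = ∫ q, K q ∂(μ.prod μ) := by
    intro θ
    conv_rhs => rw [← ProbabilityTheory.IsGaussian.map_rotation_eq_self hμ θ]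
    rw [integral_map (by fun_prop) hKc.aestronglyMeasurable]
  -- Jensen in θ
  let ν : Measure ℝ := volume.restrict (Set.Ioc 0 (π / 2))
  have hνfin : IsFiniteMeasure ν := inferInstance
  have hνr : ν.real Set.univ = π / 2 := by
    simp [ν, measureReal_def, ENNReal.toReal_ofReal (by positivity : (0:ℝ) ≤ π / 2)]
  have hνne : NeZero ν := ⟨fun h => by
    rw [h] at hνr; simp at hνr; linarith [pi_pos]⟩
  have hcurve : ∀ p : E × E, ∀ θ : ℝ,
      HasDerivAt (fun θ => f (R θ p).1) (fderiv ℝ f (R θ p).1 (R θ p).2) θ := by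
    intro p θ
    have h1 : HasDerivAt (fun θ => (R θ p).1) (R θ p).2 θ := by
      simp only [hR, ContinuousLinearMap.rotation_apply]
      exact ((hasDerivAt_cos θ).smul_const p.1).add ((hasDerivAt_sin θ).smul_const p.2)
    have h2 : HasFDerivAt f (fderiv ℝ f (R θ p).1) (R θ p).1 :=
      (hf.differentiable one_ne_zero _).hasFDerivAt
    exact h2.comp_hasDerivAt θ h1
  have hvc : ∀ p : E × E, Continuous fun θ => fderiv ℝ f (R θ p).1 (R θ p).2 := by
    intro p
    have : Continuous fun θ => R θ p := hRc.comp (by fun_prop : Continuous fun θ : ℝ => (θ, p))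
    exact (hf'.comp (continuous_fst.comp this)).clm_apply (continuous_snd.comp this)
  have hKRc : Continuous fun q : ℝ × (E × E) => K (R q.1 q.2) := hKc.comp hRc
  have hjen : ∀ p : E × E, conjY (lam * (f p.2 - f p.1)) ≤ (π / 2)⁻¹ * ∫ θ, K (R θ p) ∂ν := by
    intro p
    have hftc : ∫ θ in (0:ℝ)..(π/2), fderiv ℝ f (R θ p).1 (R θ p).2 = f p.2 - f p.1 := by
      rw [intervalIntegral.integral_eq_sub_of_hasDerivAt (fun θ _ => hcurve p θ)
        ((hvc p).intervalIntegrable _ _)]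
      simp [hR, ContinuousLinearMap.rotation_apply]
    rw [intervalIntegral.integral_of_le (by positivity)] at hftc
    have hi1 : Integrable (fun θ => a * fderiv ℝ f (R θ p).1 (R θ p).2) ν :=
      ((continuous_const.mul (hvc p)).integrableOn_Ioc)
    have hi2 : Integrable (conjY ∘ (fun θ => a * fderiv ℝ f (R θ p).1 (R θ p).2)) ν :=
      (conjY_continuous.comp (continuous_const.mul (hvc p))).integrableOn_Ioc
    have := conjY_convex.map_average_le (μ := ν) conjY_continuous.continuousOn isClosed_univ
      (by simp) hi1 hi2
    rw [average_eq, average_eq, hνr, integral_const_mul, hftc] at this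
    simp only [smul_eq_mul] at this
    convert! this using 2
    rw [ha]
    field_simp
  -- integrate
  have hbig : Integrable (fun q : ℝ × (E × E) => K (R q.1 q.2)) (ν.prod (μ.prod μ)) := by
    have hG : Integrable (fun p : E × E => (a ^ 2 * C ^ 2) * (1 + 2 * ‖p‖) ^ (2 * k + 2))
        (μ.prod μ) := by
      refine integrable_of_growth _ (by fun_prop) (a ^ 2 * C ^ 2 * 2 ^ (2 * k + 2))
        (2 * k + 2) fun p => ?_
      rw [abs_of_nonneg (by positivity), mul_assoc (a ^ 2 * C ^ 2), ← mul_pow 2 (1 + ‖p‖)]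
      gcongr
      linarith
    refine (hG.comp_snd ν).mono' hKRc.aestronglyMeasurable (Filter.Eventually.of_forall fun q => ?_)
    refine (hKb _).trans ?_
    have := hRb q.1 q.2
    gcongr
  have hLint : Integrable (fun p : E × E => conjY (lam * (f p.2 - f p.1))) (μ.prod μ) := by
    refine (hbig.integral_prod_right.const_mul (π / 2)⁻¹).mono' ?_ ?_
    · exact (conjY_continuous.comp (continuous_const.mul ((hf.continuous.comp continuous_snd).sub
        (hf.continuous.comp continuous_fst)))).aestronglyMeasurable
    · refine Filter.Eventually.of_forall fun p => ?_
      rw [Real.norm_eq_abs, abs_of_nonneg (conjY_nonneg _)]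
      exact hjen p
  have step1 : ∫ p : E × E, conjY (lam * (f p.2 - f p.1)) ∂(μ.prod μ) ≤
      ∫ q, K q ∂(μ.prod μ) := by
    calc _ ≤ ∫ p : E × E, (π / 2)⁻¹ * ∫ θ, K (R θ p) ∂ν ∂(μ.prod μ) :=
          integral_mono hLint (hbig.integral_prod_right.const_mul (π / 2)⁻¹) hjen
      _ = (π / 2)⁻¹ * ∫ θ, ∫ p : E × E, K (R θ p) ∂(μ.prod μ) ∂ν := by
          rw [integral_const_mul, integral_integral_swap (f := fun θ p => K (R θ p)) hbig]
      _ = _ := by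
          simp_rw [hrot]
          rw [integral_const, hνr, smul_eq_mul]
          field_simp
  -- final bound
  have hNint : Integrable (fun y : E => max ‖y‖ (‖y‖ ^ 2)) μ := by
    refine integrable_of_growth _ (by fun_prop) 1 2 fun y => ?_
    have := norm_nonneg y
    rw [abs_of_nonneg (le_max_of_le_left this)]
    apply max_le <;> nlinarith
  have hDint : Integrable (fun x : E => conjY ‖fderiv ℝ f x‖) μ := by
    refine integrable_of_growth _ (conjY_continuous.comp hf'.norm) (C ^ 2) (k * 2) fun x => ?_
    rw [abs_of_nonneg (conjY_nonneg _), pow_mul, ← mul_pow]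
    refine (conjY_le_sq _).trans ?_
    have := hC x
    have := abs_nonneg (f x)
    gcongr
    linarith
  refine step1.trans ?_
  have hKle : ∀ q : E × E, K q ≤ max a (a ^ 2) *
      (conjY ‖fderiv ℝ f q.1‖ * max ‖q.2‖ (‖q.2‖ ^ 2)) := by
    intro q
    calc K q = conjY |a * fderiv ℝ f q.1 q.2| := (conjY_abs _).symm
      _ ≤ conjY (a * (‖q.2‖ * ‖fderiv ℝ f q.1‖)) := by
          apply conjY_mono (abs_nonneg _)
          rw [abs_mul, abs_of_pos hapos, mul_comm ‖q.2‖]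
          gcongr
          exact (fderiv ℝ f q.1).le_opNorm _
      _ ≤ max a (a ^ 2) * conjY (‖q.2‖ * ‖fderiv ℝ f q.1‖) :=
          conjY_mul_le hapos.le (by positivity)
      _ ≤ max a (a ^ 2) * (max ‖q.2‖ (‖q.2‖ ^ 2) * conjY ‖fderiv ℝ f q.1‖) := by
          apply mul_le_mul_of_nonneg_left _ (le_max_of_le_left hapos.le)
          exact conjY_mul_le (norm_nonneg _) (norm_nonneg _)
      _ = _ := by ring
  refine (integral_mono hKint ((hDint.mul_prod hNint).const_mul _) hKle).trans_eq ?_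
  rw [integral_const_mul, integral_prod_mul (fun x => conjY ‖fderiv ℝ f x‖)
    (fun y => max ‖y‖ (‖y‖ ^ 2)), abs_of_pos hapos]
  ring

lemma core (μ : Measure E) [ProbabilityTheory.IsGaussian μ] (hμ : ∫ x, id x ∂μ = 0)
    (f : E → ℝ) (hf : ContDiff ℝ 1 f) (C : ℝ) (k : ℕ)
    (hC : ∀ x, |f x| + ‖fderiv ℝ f x‖ ≤ C * (1 + ‖x‖) ^ k) (lam : ℝ) (hlam : 0 < lam) :
    ∫ x, conjY (lam * (f x - ∫ y, f y ∂μ)) ∂μ ≤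
      max |lam * π / 2| ((lam * π / 2) ^ 2) * (∫ y, max ‖y‖ (‖y‖ ^ 2) ∂μ) *
        ∫ x, conjY ‖fderiv ℝ f x‖ ∂μ := by
  refine le_trans ?_ (prod_part μ hμ f hf C k hC lam hlam)
  have hfb : ∀ x, |f x| ≤ C * (1 + ‖x‖) ^ k := fun x => by
    linarith [hC x, norm_nonneg (fderiv ℝ f x)]
  have hC0 : 0 ≤ C := by
    have := hfb 0
    simp at this
    exact le_trans (by positivity) this
  have hfi : Integrable f μ := integrable_of_growth μ hf.continuous C k hfb
  have hfc := hf.continuous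
  have hsq : ∀ c x, |conjY (lam * (f x - c))| ≤
      (lam ^ 2 * (C + |c|) ^ 2) * (1 + ‖x‖) ^ (k * 2) := by
    intro c x
    rw [abs_of_nonneg (conjY_nonneg _), pow_mul, mul_assoc, ← mul_pow, ← mul_pow]
    refine (conjY_le_sq _).trans ?_
    rw [← sq_abs, abs_mul, abs_of_pos hlam]
    gcongr
    have h1 := abs_sub (f x) c
    have h2 : 1 ≤ (1 + ‖x‖) ^ k := one_le_pow₀ (by linarith [norm_nonneg x])
    nlinarith [hfb x, abs_nonneg c]
  have hLi : Integrable (fun p : E × E => conjY (lam * (f p.2 - f p.1))) (μ.prod μ) := by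
    refine integrable_of_growth _ (conjY_continuous.comp (by fun_prop))
      (lam ^ 2 * (2 * C) ^ 2) (k * 2) fun p => ?_
    rw [abs_of_nonneg (conjY_nonneg _), pow_mul, mul_assoc, ← mul_pow, ← mul_pow]
    refine (conjY_le_sq _).trans ?_
    rw [← sq_abs, abs_mul, abs_of_pos hlam]
    gcongr
    have h1 := abs_sub (f p.2) (f p.1)
    have h2 : C * (1 + ‖p.1‖) ^ k ≤ C * (1 + ‖p‖) ^ k := by
      have := norm_fst_le p
      gcongr
    have h3 : C * (1 + ‖p.2‖) ^ k ≤ C * (1 + ‖p‖) ^ k := by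
      have := norm_snd_le p
      gcongr
    linarith [hfb p.1, hfb p.2]
  rw [integral_prod_symm _ hLi]
  refine integral_mono ?_ hLi.integral_prod_right ?_
  · exact integrable_of_growth _ (conjY_continuous.comp (by fun_prop)) _ _ (hsq _)
  · intro x
    have hi1 : Integrable (fun y => lam * (f x - f y)) μ :=
      ((integrable_const _).sub hfi).const_mul _
    have hi2 : Integrable (conjY ∘ fun y => lam * (f x - f y)) μ := by
      refine (integrable_of_growth μ (conjY_continuous.comp (by fun_prop)) _ _
        (hsq (f x))).congr (Filter.Eventually.of_forall fun y => ?_)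
      simp only [Function.comp]
      rw [← conjY_neg]
      congr 1
      ring
    have := conjY_convex.map_integral_le conjY_continuous.continuousOn isClosed_univ
      (by simp) hi1 hi2
    rw [integral_const_mul, integral_sub (integrable_const _) hfi] at this
    simpa using this

end core

theorem poincare_mixture {n : ℕ} (f : EuclideanSpace ℝ (Fin n) → ℝ)
    (hf : ContDiff ℝ 1 f)
    (hgrowth : ∃ C k, ∀ x, |f x| + ‖fderiv ℝ f x‖ ≤ C * (1 + ‖x‖) ^ k)
    (lam : ℝ) (hlam : 0 < lam)
    (hnorm : max |lam * π / 2| ((lam * π / 2) ^ 2) *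
        ∫ y, max ‖y‖ (‖y‖ ^ 2) ∂(gaussMeasure n) = 1) :
    (∫ x, conjY (lam * (f x - ∫ y, f y ∂(gaussMeasure n))) ∂(gaussMeasure n) ≤
        ∫ x, conjY ‖fderiv ℝ f x‖ ∂(gaussMeasure n)) ∧
      luxNorm conjY (gaussMeasure n)
          (fun x => f x - ∫ y, f y ∂(gaussMeasure n)) ≤
        lam⁻¹ * luxNorm conjY (gaussMeasure n) (fun x => ‖fderiv ℝ f x‖) := by
  have hG : ProbabilityTheory.IsGaussian (gaussMeasure n) := by
    rw [gaussMeasure_eq]; infer_instance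
  have hμ : ∫ x, id x ∂(gaussMeasure n) = 0 := by
    rw [gaussMeasure_eq]; simp
  set μ := gaussMeasure n with hμdef
  obtain ⟨C, k, hC⟩ := hgrowth
  have hf' : Continuous (fderiv ℝ f) := hf.continuous_fderiv one_ne_zero
  have hfc := hf.continuous
  have hDb : ∀ x, ‖fderiv ℝ f x‖ ≤ C * (1 + ‖x‖) ^ k := fun x => by
    linarith [hC x, abs_nonneg (f x)]
  have hfb : ∀ x, |f x| ≤ C * (1 + ‖x‖) ^ k := fun x => by
    linarith [hC x, norm_nonneg (fderiv ℝ f x)]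
  have hC0 : 0 ≤ C := by
    have := hfb 0
    simp at this
    exact le_trans (by positivity) this
  have hDint : ∀ ρ : ℝ, Integrable (fun x => conjY (‖fderiv ℝ f x‖ / ρ)) μ := by
    intro ρ
    refine integrable_of_growth _ (conjY_continuous.comp (hf'.norm.div_const ρ))
      (C ^ 2 / ρ ^ 2) (k * 2) fun x => ?_
    rw [abs_of_nonneg (conjY_nonneg _), pow_mul, div_mul_eq_mul_div, ← mul_pow, ← div_pow]
    refine (conjY_le_sq _).trans ?_
    rw [div_pow, div_pow]
    have := hDb x
    gcongr
  have main : ∀ ρ : ℝ, 0 < ρ → ∫ x, conjY (lam * (f x - ∫ y, f y ∂μ) / ρ) ∂μ ≤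
      ∫ x, conjY (‖fderiv ℝ f x‖ / ρ) ∂μ := by
    intro ρ hρ
    have hd : ∀ x, fderiv ℝ (fun x => ρ⁻¹ * f x) x = ρ⁻¹ • fderiv ℝ f x := fun x =>
      ((hf.differentiable one_ne_zero x).hasFDerivAt.const_mul ρ⁻¹).fderiv
    have hn : ∀ x, ‖ρ⁻¹ • fderiv ℝ f x‖ = ‖fderiv ℝ f x‖ / ρ := fun x => by
      rw [norm_smul, norm_inv, Real.norm_eq_abs, abs_of_pos hρ]; ring
    have := core μ hμ (fun x => ρ⁻¹ * f x) (contDiff_const.mul hf) (ρ⁻¹ * C) k (fun x => by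
      rw [hd, hn, abs_mul, abs_of_pos (inv_pos.2 hρ), mul_assoc]
      calc _ = ρ⁻¹ * (|f x| + ‖fderiv ℝ f x‖) := by ring
        _ ≤ _ := by gcongr; exact hC x) lam hlam
    simp only [hd, hn] at this
    rw [hnorm, one_mul, integral_const_mul] at this
    refine le_trans (le_of_eq ?_) this
    congr 1
    ext x
    congr 1
    ring
  have hLint : ∀ ρ : ℝ, Integrable (fun x => conjY ((f x - ∫ y, f y ∂μ) / ρ)) μ := by
    intro ρ
    set c := ∫ y, f y ∂μ
    refine integrable_of_growth _ (conjY_continuous.comp (by fun_prop))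
      ((C + |c|) ^ 2 / ρ ^ 2) (k * 2) fun x => ?_
    rw [abs_of_nonneg (conjY_nonneg _), pow_mul, div_mul_eq_mul_div, ← mul_pow]
    refine (conjY_le_sq _).trans ?_
    rw [div_pow, ← sq_abs (f x - c)]
    gcongr
    have h1 := abs_sub (f x) c
    have h2 : 1 ≤ (1 + ‖x‖) ^ k := one_le_pow₀ (by linarith [norm_nonneg x])
    nlinarith [hfb x, abs_nonneg c]
  refine ⟨by simpa using main 1 one_pos, ?_⟩
  unfold luxNorm
  set S := {ρ : ℝ | 0 < ρ ∧ ∫ x, conjY (‖fderiv ℝ f x‖ / ρ) ∂μ ≤ 1 ∧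
    Integrable (fun x => conjY (‖fderiv ℝ f x‖ / ρ)) μ} with hS
  have hne : S.Nonempty := by
    set I := ∫ x, conjY ‖fderiv ℝ f x‖ ∂μ
    have hI : 0 ≤ I := integral_nonneg fun x => conjY_nonneg _
    have hρ : 0 < I + 1 := by linarith
    refine ⟨I + 1, hρ, ?_, hDint _⟩
    have hle : ∀ x, conjY (‖fderiv ℝ f x‖ / (I + 1)) ≤ (I + 1)⁻¹ * conjY ‖fderiv ℝ f x‖ := by
      intro x
      rw [div_eq_inv_mul]
      refine (conjY_mul_le (inv_nonneg.2 hρ.le) (norm_nonneg _)).trans_eq ?_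
      congr 1
      apply max_eq_left
      have h0 : 0 ≤ (I + 1)⁻¹ := inv_nonneg.2 hρ.le
      have h1 : (I + 1)⁻¹ ≤ 1 := inv_le_one_of_one_le₀ (by linarith)
      nlinarith
    refine (integral_mono (hDint _) ((by simpa using hDint 1 :
      Integrable (fun x => conjY ‖fderiv ℝ f x‖) μ).const_mul _) hle).trans ?_
    rw [integral_const_mul, inv_mul_le_iff₀ hρ]
    linarith
  rw [inv_mul_eq_div, le_div_iff₀ hlam]
  refine le_csInf hne fun ρ hρ => ?_
  obtain ⟨h0, h1, -⟩ := hρ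
  rw [← le_div_iff₀ hlam]
  refine csInf_le ⟨0, fun r hr => hr.1.le⟩ ⟨by positivity, ?_, hLint _⟩
  refine le_trans (le_of_eq ?_) ((main ρ h0).trans h1)
  congr 1
  ext x
  congr 1
  field_simp
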